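/- Monotonic Path Property: let s be a nonempty string and let k be the longest canonical token that is a suffix of s (k exists, since the single-character token formed by the last character of s is canonical). Then a node t of SufSucTree(k) satisfies the Prefix Last-Token Condition with respect to s if and only if t lies on the ancestor path P(θ(s)) from the last token θ(s) to the root of SufSucTree(k). -/

import Mathlib

/-!
Common BPE formalization preamble.

A token is a (nonempty) string over the alphabet `α`, modeled as `List α`.
A merge rule is a pair of tokens; a dictionary is an ordered list of rules
(earlier rules have strictly higher priority).
-/

namespace BPE

variable {α : Type*} [DecidableEq α]

/-- A token is a string over the alphabet (nonemptiness is imposed by hypotheses). -/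
abbrev Token (α : Type*) := List α

/-- A merge rule is an ordered pair of tokens. -/
abbrev Rule (α : Type*) := Token α × Token α

/-- A dictionary is an ordered list of merge rules; earlier = higher priority. -/
abbrev Dict (α : Type*) := List (Rule α)

/-- Apply a single merge rule to a token list, scanning left to right and replacing
each adjacent occurrence of `r.1` followed by `r.2` by the concatenated token,
resuming the scan after the newly formed token (no overlaps). -/
def applyRule (r : Rule α) : List (Token α) → List (Token α)
  | [] => []
  | [t] => [t]
  | t :: u :: rest =>
      if t = r.1 ∧ u = r.2 then (r.1 ++ r.2) :: applyRule r rest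
      else t :: applyRule r (u :: rest)

/-- `φ₀(s)`: the list of single-character tokens of `s`. -/
def phi0 (s : List α) : List (Token α) := s.map (fun c => [c])

/-- `φ_k(s)`: the token list after applying the first `k` rules of `D` to `s`. -/
def phiK (D : Dict α) (k : ℕ) (s : List α) : List (Token α) :=
  (D.take k).foldl (fun φ r => applyRule r φ) (phi0 s)

/-- The BPE tokenization `𝕋_D(s)`. -/
def tokenize (D : Dict α) (s : List α) : List (Token α) :=
  phiK D D.length s

/-- Detokenization `π`: concatenation of the tokens. -/
def detok (φ : List (Token α)) : List α := φ.flatten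

/-- A dictionary is valid if all rule components are genuine (nonempty) tokens. -/
def ValidDict (D : Dict α) : Prop := ∀ r ∈ D, r.1 ≠ [] ∧ r.2 ≠ []

/-- A token `t` is canonical if `𝕋_D(t) = [t]`. -/
def IsCanonical (D : Dict α) (t : Token α) : Prop := tokenize D t = [t]

/-- The last token `θ(s)`: last element of `𝕋_D(s)` (defaulting to `[]`). -/
def theta (D : Dict α) (s : List α) : Token α := (tokenize D s).getLastD []

/-- `j` (0-based) is the index of the canonical rule of `t`:
`φ_j(t)` has exactly two tokens and `φ_{j+1}(t) = [t]`. -/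
def IsCanonicalRuleIdx (D : Dict α) (t : Token α) (j : ℕ) : Prop :=
  j < D.length ∧ (phiK D j t).length = 2 ∧ phiK D (j + 1) t = [t]

open Classical in
/-- The (0-based) index of the canonical rule of `t` (junk value `0` if none exists). -/
noncomputable def canonIdx (D : Dict α) (t : Token α) : ℕ :=
  if h : ∃ j, IsCanonicalRuleIdx D t j then h.choose else 0

/-- Predecessor `pre(t)`: first token of the two-token stage `φ_{j-1}(t)`. -/
noncomputable def pre (D : Dict α) (t : Token α) : Token α :=
  (phiK D (canonIdx D t) t).headD []

/-- Successor `suc(t)`: second token of the two-token stage `φ_{j-1}(t)`. -/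
noncomputable def suc (D : Dict α) (t : Token α) : Token α :=
  (phiK D (canonIdx D t) t).getLastD []

/-- `InPath D x a` means `a ∈ P(x)`: `a` is obtained from `x` by iterating `suc`,
i.e. `a` lies on the ancestor path of `x` in the Successor Forest. -/
def InPath (D : Dict α) (x a : Token α) : Prop :=
  ∃ n : ℕ, (suc D)^[n] x = a

/-- `s` with the suffix `u` removed. -/
def dropSuffix (s u : List α) : List α := s.take (s.length - u.length)

/-- The Prefix Last-Token Condition of the canonical suffix token `t`
with respect to the string `s`. Atomic tokens satisfy it by definition;
a non-atomic token must satisfy Reachability and Priority dominance. -/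
def PLTC (D : Dict α) (s t : Token α) : Prop :=
  t.length = 1 ∨
    (1 < t.length ∧
      InPath D (theta D (dropSuffix s (suc D t))) (pre D t) ∧
      (theta D (dropSuffix s (suc D t)) ≠ pre D t →
        ∀ u : Token α, 1 < u.length → IsCanonical D u → suc D u = pre D t →
          InPath D (theta D (dropSuffix s (suc D t))) u →
          canonIdx D t < canonIdx D u))

/-!
The last token of `s` evolves through the stages `φ₀(s), φ₁(s), …` only by absorbing tokens on its
left, and each absorption is the canonical rule of the token it creates. Hence `P(θ(s))` is exactly
the set of last tokens of the stages of `s`, and `t` lies on it iff `t` is the last token right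
after its canonical rule, i.e. iff the boundary between `q` and `t` in `s = q·t` survives that rule.

Whether a rule destroys a boundary depends, to the right of it, on the adjacent token alone. Until
the canonical rule of `t` is applied, `t` and `pre(t)` start with the same token, so the boundary
`q|t` survives it iff `q|pre(t)` does. By the description of paths again, now for `q·pre(t)`, the
latter says that `pre(t)` is on the path of `θ(q·pre(t))` and is not absorbed before the canonical
rule of `t`, which is the Prefix Last-Token Condition.
-/

theorem applyRule_eq_self_of_notMem {r : Rule α} {φ : List (Token α)} (h : r.1 ∉ φ) :
    applyRule r φ = φ := by
  fun_induction applyRule r φ with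
  | case1 | case2 => rfl
  | case3 t u rest hr => exact absurd (hr.1 ▸ List.mem_cons_self) h
  | case4 t u rest _ ih => rw [ih fun hmem => h (List.mem_cons_of_mem t hmem)]

theorem flatten_applyRule (r : Rule α) (φ : List (Token α)) :
    (applyRule r φ).flatten = φ.flatten := by
  fun_induction applyRule r φ with
  | case1 | case2 => rfl
  | case3 t u rest hr ih => simp only [List.flatten_cons, ih, hr, List.append_assoc]
  | case4 t u rest _ ih => rw [List.flatten_cons, ih, ← List.flatten_cons]

theorem nil_notMem_applyRule {r : Rule α} {φ : List (Token α)} (h : [] ∉ φ) :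
    [] ∉ applyRule r φ := by
  fun_induction applyRule r φ with
  | case1 | case2 => exact h
  | case3 t u rest hr ih => simp_all [List.mem_cons, eq_comm]
  | case4 t u rest _ ih => simp_all [List.mem_cons]

theorem length_le_two_mul_length_applyRule (r : Rule α) (φ : List (Token α)) :
    φ.length ≤ 2 * (applyRule r φ).length := by
  fun_induction applyRule r φ with
  | case1 => simp
  | case2 => simp
  | case3 t u rest _ ih => simp only [List.length_cons]; omega
  | case4 t u rest _ ih => simp only [List.length_cons] at ih ⊢; omega

theorem exists_append_of_applyRule_eq_append {r : Rule α} {φ A B : List (Token α)}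
    (h : applyRule r φ = A ++ B) :
    ∃ φ₁ φ₂, φ = φ₁ ++ φ₂ ∧ applyRule r φ₁ = A ∧ applyRule r φ₂ = B := by
  induction φ using applyRule.induct r generalizing A with
  | case1 =>
    obtain ⟨rfl, rfl⟩ := List.append_eq_nil_iff.1 h.symm
    exact ⟨[], [], rfl, rfl, rfl⟩
  | case2 t =>
    obtain ⟨rfl, rfl⟩ | ⟨rfl, rfl⟩ := List.append_eq_singleton_iff.1 h.symm
    · exact ⟨[], [t], rfl, rfl, rfl⟩
    · exact ⟨[t], [], rfl, rfl, rfl⟩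
  | case3 t u rest hr ih =>
    obtain _ | ⟨a, A⟩ := A
    · exact ⟨[], t :: u :: rest, rfl, rfl, h⟩
    rw [applyRule, if_pos hr, List.cons_append, List.cons.injEq] at h
    obtain ⟨φ₁, φ₂, rfl, rfl, rfl⟩ := ih h.2
    exact ⟨t :: u :: φ₁, φ₂, rfl, by rw [applyRule, if_pos hr, h.1], rfl⟩
  | case4 t u rest hr ih =>
    obtain _ | ⟨a, A⟩ := A
    · exact ⟨[], t :: u :: rest, rfl, rfl, h⟩
    rw [applyRule, if_neg hr, List.cons_append, List.cons.injEq] at h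
    obtain ⟨φ₁, φ₂, hφ, rfl, rfl⟩ := ih h.2
    refine ⟨t :: φ₁, φ₂, congrArg (t :: ·) hφ, ?_, rfl⟩
    obtain _ | ⟨v, φ₁⟩ := φ₁
    · rw [h.1]; rfl
    · obtain ⟨rfl, -⟩ := List.cons.inj hφ
      rw [applyRule, if_neg hr, h.1]

theorem applyRule_append_of_head?_eq {r : Rule α} {φ ψ ψ' : List (Token α)} (hψ : [] ∉ ψ)
    (h : applyRule r (φ ++ ψ) = applyRule r φ ++ applyRule r ψ) (hhead : ψ'.head? = ψ.head?) :
    applyRule r (φ ++ ψ') = applyRule r φ ++ applyRule r ψ' := by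
  obtain _ | ⟨a, ψ⟩ := ψ
  · rw [List.head?_eq_none_iff.1 hhead, List.append_nil]; exact (List.append_nil _).symm
  obtain ⟨ψ', rfl⟩ := List.head?_eq_some_iff.1 hhead
  induction φ using applyRule.induct r with
  | case1 => rfl
  | case2 t =>
    have hr : ¬(t = r.1 ∧ a = r.2) := by
      rintro ⟨rfl, rfl⟩
      simp only [List.nil_append, List.cons_append, applyRule, and_self, if_true, List.cons.injEq,
        List.append_right_eq_self] at h
      exact hψ (List.mem_cons.2 (Or.inl h.1.symm))
    simp only [List.cons_append, List.nil_append, applyRule, if_neg hr]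
  | case3 t u rest hr ih =>
    simp only [List.cons_append, applyRule, if_pos hr, List.cons.injEq, true_and] at h ⊢
    exact ih h
  | case4 t u rest hr ih =>
    simp only [List.cons_append, applyRule, if_neg hr, List.cons.injEq, true_and] at h ih ⊢
    exact ih h

section Stages

variable {D : Dict α} {i j : ℕ} {p q s t : List α}

theorem phiK_zero (D : Dict α) (s : List α) : phiK D 0 s = phi0 s := rfl

theorem nil_notMem_phiK (D : Dict α) (i : ℕ) (s : List α) : [] ∉ phiK D i s :=
  List.foldlRecOn (motive := fun φ => [] ∉ φ) (D.take i) _ (by simp [phi0])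
    fun _ hφ _ _ => nil_notMem_applyRule hφ

theorem phiK_succ (D : Dict α) (i : ℕ) (s : List α) :
    phiK D (i + 1) s = applyRule (D.getD i ([], [])) (phiK D i s) := by
  obtain hi | hi := lt_or_ge i D.length
  · simp only [phiK, List.take_succ_eq_append_getElem hi, List.foldl_append, List.foldl_cons,
      List.foldl_nil, List.getD_eq_getElem _ _ hi]
  · -- Past the end of `D` the default rule `([], [])` is inert, because no token is empty.
    rw [List.getD_eq_default _ _ hi, applyRule_eq_self_of_notMem (nil_notMem_phiK D i s), phiK,
      phiK, List.take_of_length_le hi, List.take_of_length_le (hi.trans i.le_succ)]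

theorem phiK_min_length (D : Dict α) (i : ℕ) (s : List α) :
    phiK D (min i D.length) s = phiK D i s := by
  rw [phiK, ← List.take_eq_take_min, phiK]

theorem flatten_phiK (D : Dict α) (i : ℕ) (s : List α) : (phiK D i s).flatten = s := by
  induction i with
  | zero => rw [phiK_zero, phi0, ← List.flatMap_def, List.flatMap_singleton']
  | succ i ih => rw [phiK_succ, flatten_applyRule, ih]

@[simp]
theorem phiK_eq_nil_iff : phiK D i s = [] ↔ s = [] := by
  constructor
  · intro h
    rw [← flatten_phiK D i s, h, List.flatten_nil]
  · rintro rfl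
    refine List.eq_nil_iff_forall_not_mem.2 fun t ht => nil_notMem_phiK D i [] ?_
    exact List.flatten_eq_nil_iff.1 (flatten_phiK D i []) t ht ▸ ht

theorem ne_nil_of_phiK_eq_singleton (h : phiK D i t = [t]) : t ≠ [] := by
  rintro rfl
  exact nil_notMem_phiK D i [] (h ▸ List.mem_singleton_self [])

theorem phiK_eq_singleton_mono (hij : i ≤ j) (h : phiK D i t = [t]) : phiK D j t = [t] := by
  induction j, hij using Nat.le_induction with
  | base => exact h
  | succ j _ ih => rw [phiK_succ, ih, applyRule]

theorem phiK_eq_singleton_of_length_eq_one (h : t.length = 1) (i : ℕ) : phiK D i t = [t] := by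
  obtain ⟨a, rfl⟩ := List.length_eq_one_iff.1 h
  exact phiK_eq_singleton_mono i.zero_le rfl

theorem isCanonical_of_phiK_eq_singleton (h : phiK D i t = [t]) : IsCanonical D t := by
  rw [← phiK_min_length] at h
  exact phiK_eq_singleton_mono (min_le_right _ _) h

theorem phiK_flatten_of_phiK_eq_append {A B : List (Token α)} (h : phiK D i s = A ++ B) :
    phiK D i A.flatten = A ∧ phiK D i B.flatten = B := by
  induction i generalizing A B with
  | zero =>
    obtain ⟨a, b, rfl, rfl, rfl⟩ := List.map_eq_append_iff.1 h
    exact ⟨congrArg phi0 (flatten_phiK D 0 a), congrArg phi0 (flatten_phiK D 0 b)⟩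
  | succ i ih =>
    rw [phiK_succ] at h
    obtain ⟨φ₁, φ₂, hφ, rfl, rfl⟩ := exists_append_of_applyRule_eq_append h
    simp only [flatten_applyRule, phiK_succ, ih hφ, and_self]

/-- The cut between `p` and `q` in `p ++ q` is a token boundary after the first `i` rules: no rule
so far has merged across it. -/
def IsBoundary (D : Dict α) (i : ℕ) (p q : List α) : Prop :=
  phiK D i (p ++ q) = phiK D i p ++ phiK D i q

theorem isBoundary_zero : IsBoundary D 0 p q :=
  List.map_append

theorem isBoundary_of_phiK_eq_append {A B : List (Token α)} (h : phiK D i s = A ++ B) :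
    IsBoundary D i A.flatten B.flatten := by
  obtain ⟨hA, hB⟩ := phiK_flatten_of_phiK_eq_append h
  rw [IsBoundary, hA, hB, ← h, ← List.flatten_append, ← h, flatten_phiK]

theorem IsBoundary.of_succ (h : IsBoundary D (i + 1) p q) : IsBoundary D i p q := by
  rw [IsBoundary, phiK_succ] at h
  obtain ⟨φ₁, φ₂, hφ, hp, hq⟩ := exists_append_of_applyRule_eq_append h
  have hp' : φ₁.flatten = p := by rw [← flatten_applyRule, hp, flatten_phiK]
  have hq' : φ₂.flatten = q := by rw [← flatten_applyRule, hq, flatten_phiK]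
  exact hp' ▸ hq' ▸ isBoundary_of_phiK_eq_append hφ

theorem IsBoundary.mono (hij : i ≤ j) (h : IsBoundary D j p q) : IsBoundary D i p q :=
  Nat.decreasingInduction (motive := fun i _ => IsBoundary D i p q)
    (fun _ _ => IsBoundary.of_succ) h hij

theorem IsBoundary.of_head?_eq {q' : List α} (h : IsBoundary D i p q)
    (hhead : ∀ j < i, (phiK D j q').head? = (phiK D j q).head?) : IsBoundary D i p q' := by
  induction i with
  | zero => exact isBoundary_zero
  | succ i ih =>
    have hq' := ih h.of_succ fun j hj => hhead j (hj.trans i.lt_succ_self)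
    have hq := h.of_succ
    rw [IsBoundary, phiK_succ, phiK_succ, phiK_succ, hq] at h
    rw [IsBoundary, phiK_succ, phiK_succ, phiK_succ, hq']
    exact applyRule_append_of_head?_eq (nil_notMem_phiK D i q) h (hhead i i.lt_succ_self)

theorem IsBoundary.head?_phiK_append (h : IsBoundary D i p q) (hp : p ≠ []) :
    (phiK D i (p ++ q)).head? = (phiK D i p).head? := by
  rw [h, List.head?_append_of_ne_nil _ (phiK_eq_nil_iff.not.2 hp)]

/-- The last token of `s` after the first `i` rules, with default `[]` for `s = []`. By definition
`theta D s = lastToken D D.length s` and `suc D t = lastToken D (canonIdx D t) t`. -/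
def lastToken (D : Dict α) (i : ℕ) (s : List α) : Token α := (phiK D i s).getLastD []

@[simp]
theorem lastToken_nil (D : Dict α) (i : ℕ) : lastToken D i [] = [] := by
  rw [lastToken, phiK_eq_nil_iff.2 rfl, List.getLastD_nil]

theorem lastToken_eq_self (h : phiK D i t = [t]) : lastToken D i t = t := by
  rw [lastToken, h]; rfl

theorem IsBoundary.lastToken_append (h : IsBoundary D i p q) (hq : q ≠ []) :
    lastToken D i (p ++ q) = lastToken D i q := by
  rw [lastToken, lastToken, h, List.getLastD_eq_getLast?, List.getLastD_eq_getLast?,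
    List.getLast?_append_of_ne_nil _ (phiK_eq_nil_iff.not.2 hq)]

theorem exists_isBoundary_lastToken (D : Dict α) (i : ℕ) (hs : s ≠ []) :
    ∃ p, s = p ++ lastToken D i s ∧ IsBoundary D i p (lastToken D i s) ∧
      phiK D i (lastToken D i s) = [lastToken D i s] := by
  have hne : phiK D i s ≠ [] := phiK_eq_nil_iff.not.2 hs
  have hlast : lastToken D i s = (phiK D i s).getLast hne := by
    rw [lastToken, List.getLastD_eq_getLast?, List.getLast?_eq_some_getLast hne, Option.getD_some]
  have hsplit : phiK D i s = (phiK D i s).dropLast ++ [lastToken D i s] := by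
    rw [hlast, List.dropLast_append_getLast]
  have hflat : [lastToken D i s].flatten = lastToken D i s := List.flatten_singleton
  have hbd := isBoundary_of_phiK_eq_append hsplit
  have htok := (phiK_flatten_of_phiK_eq_append hsplit).2
  rw [hflat] at hbd htok
  refine ⟨(phiK D i s).dropLast.flatten, ?_, hbd, htok⟩
  conv_lhs => rw [← flatten_phiK D i s, hsplit, List.flatten_append, hflat]

theorem phiK_lastToken (D : Dict α) (i : ℕ) (hs : s ≠ []) :
    phiK D i (lastToken D i s) = [lastToken D i s] :=
  have ⟨_, _, _, h⟩ := exists_isBoundary_lastToken D i hs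
  h

theorem lastToken_suffix (D : Dict α) (i : ℕ) (s : List α) : lastToken D i s <:+ s := by
  obtain rfl | hs := eq_or_ne s []
  · rw [lastToken_nil]
  obtain ⟨p, h, -⟩ := exists_isBoundary_lastToken D i hs
  exact ⟨p, h.symm⟩

theorem lastToken_lastToken (D : Dict α) (i j : ℕ) (s : List α) :
    lastToken D i (lastToken D j s) = lastToken D (min i j) s := by
  obtain rfl | hs := eq_or_ne s []
  · simp only [lastToken_nil]
  obtain ⟨p, hp, hbd, htok⟩ := exists_isBoundary_lastToken D j hs
  obtain hij | hji := le_total i j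
  · rw [min_eq_left hij, ← (hbd.mono hij).lastToken_append (ne_nil_of_phiK_eq_singleton htok), ← hp]
  · rw [min_eq_right hji, lastToken_eq_self (phiK_eq_singleton_mono hji htok)]

theorem lastToken_lastToken_of_le (hij : i ≤ j) (s : List α) :
    lastToken D i (lastToken D j s) = lastToken D i s := by
  rw [lastToken_lastToken, min_eq_left hij]

theorem lastToken_min_length (D : Dict α) (i : ℕ) (s : List α) :
    lastToken D (min i D.length) s = lastToken D i s := by
  rw [lastToken, lastToken, phiK_min_length]

theorem lastToken_theta (D : Dict α) (i : ℕ) (s : List α) :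
    lastToken D i (theta D s) = lastToken D i s :=
  (lastToken_lastToken D i D.length s).trans (lastToken_min_length D i s)

theorem lastToken_append_eq_iff_isBoundary (ht : phiK D i t = [t]) :
    lastToken D i (q ++ t) = t ↔ IsBoundary D i q t := by
  have hne := ne_nil_of_phiK_eq_singleton ht
  constructor
  · intro h
    obtain ⟨p, hp, hbd, -⟩ := exists_isBoundary_lastToken D i (s := q ++ t) (by simp [hne])
    rw [h] at hp hbd
    rwa [List.append_cancel_right hp]
  · intro h
    rw [h.lastToken_append hne, lastToken_eq_self ht]

end Stages

section CanonicalRule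

variable {D : Dict α} {i : ℕ} {q t : List α}

theorem exists_isCanonicalRuleIdx (hc : IsCanonical D t) (hl : 1 < t.length) :
    ∃ j, IsCanonicalRuleIdx D t j := by
  classical
  have hex : ∃ i, phiK D i t = [t] := ⟨D.length, hc⟩
  obtain ⟨j, hj⟩ : ∃ j, Nat.find hex = j + 1 := by
    refine Nat.exists_eq_succ_of_ne_zero fun h0 => ?_
    have hlen := congrArg List.length ((Nat.find_eq_zero hex).1 h0)
    rw [phiK_zero, phi0, List.length_map, List.length_singleton] at hlen
    omega
  have hmerged : phiK D (j + 1) t = [t] := hj ▸ Nat.find_spec hex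
  have hunmerged : phiK D j t ≠ [t] := Nat.find_min hex (by omega)
  have hle : j + 1 ≤ D.length := hj ▸ Nat.find_min' hex hc
  refine ⟨j, hle, le_antisymm ?_ ?_, hmerged⟩
  · have hlen := length_le_two_mul_length_applyRule (D.getD j ([], [])) (phiK D j t)
    rwa [← phiK_succ, hmerged] at hlen
  · have hpos : (phiK D j t).length ≠ 0 := by
      rw [Ne, List.length_eq_zero_iff, phiK_eq_nil_iff]
      exact ne_nil_of_phiK_eq_singleton hmerged
    have hone : (phiK D j t).length ≠ 1 := by
      intro h
      obtain ⟨u, hu⟩ := List.length_eq_one_iff.1 h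
      have hut := flatten_phiK D j t
      rw [hu, List.flatten_singleton] at hut
      exact hunmerged (hut ▸ hu)
    omega

theorem canonIdx_spec (hc : IsCanonical D t) (hl : 1 < t.length) :
    IsCanonicalRuleIdx D t (canonIdx D t) := by
  have hex := exists_isCanonicalRuleIdx hc hl
  rw [canonIdx, dif_pos hex]
  exact hex.choose_spec

theorem phiK_eq_singleton_iff (hc : IsCanonical D t) (hl : 1 < t.length) :
    phiK D i t = [t] ↔ canonIdx D t < i := by
  obtain ⟨-, htwo, hmerged⟩ := canonIdx_spec hc hl
  constructor
  · intro h
    by_contra! hi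
    rw [phiK_eq_singleton_mono hi h] at htwo
    exact absurd htwo (by simp)
  · intro h
    exact phiK_eq_singleton_mono h hmerged

theorem phiK_canonIdx (hc : IsCanonical D t) (hl : 1 < t.length) :
    phiK D (canonIdx D t) t = [pre D t] ++ [suc D t] := by
  obtain ⟨x, y, hxy⟩ := List.length_eq_two.1 (canonIdx_spec hc hl).2.1
  simp [pre, suc, hxy]

theorem pre_append_suc (hc : IsCanonical D t) (hl : 1 < t.length) : pre D t ++ suc D t = t := by
  simpa [phiK_canonIdx hc hl] using flatten_phiK D (canonIdx D t) t

theorem phiK_pre (hc : IsCanonical D t) (hl : 1 < t.length) (hi : canonIdx D t ≤ i) :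
    phiK D i (pre D t) = [pre D t] := by
  have h := (phiK_flatten_of_phiK_eq_append (phiK_canonIdx hc hl)).1
  rw [List.flatten_singleton] at h
  exact phiK_eq_singleton_mono hi h

theorem length_suc_lt (hc : IsCanonical D t) (hl : 1 < t.length) :
    (suc D t).length < t.length := by
  have hpos := List.length_pos_iff.2 (ne_nil_of_phiK_eq_singleton (phiK_pre hc hl le_rfl))
  have hlen := congrArg List.length (pre_append_suc hc hl)
  rw [List.length_append] at hlen
  omega

theorem isBoundary_pre_suc (hc : IsCanonical D t) (hl : 1 < t.length) :
    IsBoundary D (canonIdx D t) (pre D t) (suc D t) := by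
  simpa only [List.flatten_singleton] using isBoundary_of_phiK_eq_append (phiK_canonIdx hc hl)

theorem head?_phiK_pre (hc : IsCanonical D t) (hl : 1 < t.length) (hi : i ≤ canonIdx D t) :
    (phiK D i (pre D t)).head? = (phiK D i t).head? := by
  have hne := ne_nil_of_phiK_eq_singleton (phiK_pre hc hl le_rfl)
  rw [← ((isBoundary_pre_suc hc hl).mono hi).head?_phiK_append hne, pre_append_suc hc hl]

theorem isBoundary_pre_iff (hc : IsCanonical D t) (hl : 1 < t.length) :
    IsBoundary D (canonIdx D t + 1) q (pre D t) ↔ IsBoundary D (canonIdx D t + 1) q t := by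
  have hhead : ∀ j < canonIdx D t + 1, (phiK D j (pre D t)).head? = (phiK D j t).head? :=
    fun _ hj => head?_phiK_pre hc hl (Nat.le_of_lt_succ hj)
  exact ⟨fun h => h.of_head?_eq fun j hj => (hhead j hj).symm, fun h => h.of_head?_eq hhead⟩

theorem suc_eq_self (h : t.length ≤ 1) : suc D t = t := by
  obtain rfl | ht := eq_or_ne t []
  · exact lastToken_nil D _
  · have hlen : t.length = 1 := le_antisymm h (List.length_pos_iff.2 ht)
    exact lastToken_eq_self (phiK_eq_singleton_of_length_eq_one hlen _)

end CanonicalRule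

section AncestorPath

variable {D : Dict α} {i : ℕ} {s t p : List α}

theorem lastToken_eq_lastToken_succ_or_suc (D : Dict α) (i : ℕ) (s : List α) :
    lastToken D i s = lastToken D (i + 1) s ∨
      lastToken D i s = suc D (lastToken D (i + 1) s) := by
  obtain rfl | hs := eq_or_ne s []
  · simp only [lastToken_nil, true_or]
  have htok := phiK_lastToken D (i + 1) hs
  rw [← lastToken_lastToken_of_le i.le_succ s]
  generalize lastToken D (i + 1) s = y at htok
  by_cases hy : phiK D i y = [y]
  · exact Or.inl (lastToken_eq_self hy)
  · have hlt := List.length_pos_iff.2 (ne_nil_of_phiK_eq_singleton htok)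
    have hl : 1 < y.length :=
      lt_of_le_of_ne hlt fun h => hy (phiK_eq_singleton_of_length_eq_one h.symm i)
    have hc := isCanonical_of_phiK_eq_singleton htok
    rw [phiK_eq_singleton_iff hc hl] at hy htok
    obtain rfl : i = canonIdx D y := by omega
    exact Or.inr rfl

theorem inPath_theta_lastToken (D : Dict α) (i : ℕ) (s : List α) :
    InPath D (theta D s) (lastToken D i s) := by
  rw [← lastToken_min_length]
  refine Nat.decreasingInduction (motive := fun i _ => InPath D (theta D s) (lastToken D i s))
    ?_ ⟨0, rfl⟩ (min_le_right i D.length)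
  rintro i - ⟨n, hn⟩
  obtain h | h := lastToken_eq_lastToken_succ_or_suc D i s
  · exact ⟨n, hn.trans h.symm⟩
  · exact ⟨n + 1, by rw [Function.iterate_succ_apply', hn, h]⟩

theorem inPath_theta_iff_exists_lastToken :
    InPath D (theta D s) t ↔ ∃ i, lastToken D i s = t := by
  constructor
  · rintro ⟨n, rfl⟩
    induction n with
    | zero => exact ⟨D.length, rfl⟩
    | succ n ih =>
      obtain ⟨i, hi⟩ := ih
      rw [Function.iterate_succ_apply', ← hi]
      exact ⟨_, (lastToken_lastToken D _ i s).symm⟩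
  · rintro ⟨i, rfl⟩
    exact inPath_theta_lastToken D i s

theorem inPath_theta_iff_lastToken_canonIdx_succ (hc : IsCanonical D t) (hl : 1 < t.length) :
    InPath D (theta D s) t ↔ lastToken D (canonIdx D t + 1) s = t := by
  rw [inPath_theta_iff_exists_lastToken]
  refine ⟨?_, fun h => ⟨_, h⟩⟩
  rintro ⟨i, rfl⟩
  have hs : s ≠ [] := by
    rintro rfl
    exact absurd hl (by simp)
  have hi := (phiK_eq_singleton_iff hc hl).1 (phiK_lastToken D i hs)
  calc lastToken D (canonIdx D (lastToken D i s) + 1) s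
      = lastToken D (canonIdx D (lastToken D i s) + 1) (lastToken D i s) :=
        (lastToken_lastToken_of_le hi s).symm
    _ = lastToken D i s :=
        lastToken_eq_self ((phiK_eq_singleton_iff hc hl).2 (Nat.lt_succ_self _))

theorem isCanonical_of_inPath_theta (h : InPath D (theta D s) t) (ht : t ≠ []) :
    IsCanonical D t := by
  obtain ⟨i, rfl⟩ := inPath_theta_iff_exists_lastToken.1 h
  have hs : s ≠ [] := by
    rintro rfl
    exact ht (lastToken_nil D i)
  exact isCanonical_of_phiK_eq_singleton (phiK_lastToken D i hs)

theorem exists_child_of_inPath {x : Token α} (h : InPath D x t) (hne : x ≠ t) :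
    ∃ u, 1 < u.length ∧ suc D u = t ∧ InPath D x u := by
  obtain ⟨n, hn⟩ := h
  induction n with
  | zero => exact absurd hn hne
  | succ n ih =>
    by_cases hfix : (suc D)^[n] x = t
    · exact ih hfix
    rw [Function.iterate_succ_apply'] at hn
    refine ⟨_, ?_, hn, n, rfl⟩
    by_contra! hl
    exact hfix (suc_eq_self hl ▸ hn)

theorem lastToken_eq_iff_inPath_and_forall_child (hp : phiK D i p = [p]) :
    lastToken D i s = p ↔ InPath D (theta D s) p ∧
      (theta D s ≠ p → ∀ u : Token α, 1 < u.length → IsCanonical D u → suc D u = p →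
        InPath D (theta D s) u → i ≤ canonIdx D u) := by
  constructor
  · refine fun h => ⟨inPath_theta_iff_exists_lastToken.2 ⟨i, h⟩, fun _ u hl hc hsuc hu => ?_⟩
    by_contra! hlt
    have hup : u <:+ p := by
      rw [← (inPath_theta_iff_lastToken_canonIdx_succ hc hl).1 hu, ← h,
        ← lastToken_lastToken_of_le hlt]
      exact lastToken_suffix D _ _
    exact (hsuc ▸ length_suc_lt hc hl).not_ge hup.length_le
  · rintro ⟨hpath, hprio⟩
    by_cases htheta : theta D s = p
    · rw [← lastToken_theta, htheta, lastToken_eq_self hp]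
    obtain ⟨u, hl, hsuc, hu⟩ := exists_child_of_inPath hpath htheta
    have hc := isCanonical_of_inPath_theta hu (List.length_pos_iff.1 (pos_of_gt hl))
    have hi := hprio htheta u hl hc hsuc hu
    calc lastToken D i s
        = lastToken D i (lastToken D (canonIdx D u + 1) s) :=
          (lastToken_lastToken_of_le (Nat.le_succ_of_le hi) s).symm
      _ = lastToken D i u := by rw [(inPath_theta_iff_lastToken_canonIdx_succ hc hl).1 hu]
      _ = lastToken D i (suc D u) := (lastToken_lastToken_of_le hi u).symm
      _ = p := by rw [hsuc, lastToken_eq_self hp]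

end AncestorPath

theorem dropSuffix_append {β : Type*} (p u : List β) : dropSuffix (p ++ u) u = p := by
  rw [dropSuffix, List.length_append, Nat.add_sub_cancel, List.take_left]

theorem pltc_append_iff {D : Dict α} {q t : List α} (hc : IsCanonical D t) (hl : 1 < t.length) :
    PLTC D (q ++ t) t ↔ lastToken D (canonIdx D t + 1) (q ++ pre D t) = pre D t := by
  have hqt : q ++ t = q ++ pre D t ++ suc D t := by rw [List.append_assoc, pre_append_suc hc hl]
  have hdrop : dropSuffix (q ++ t) (suc D t) = q ++ pre D t := by rw [hqt, dropSuffix_append]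
  rw [lastToken_eq_iff_inPath_and_forall_child (phiK_pre hc hl (Nat.le_succ _)), PLTC, hdrop]
  simp only [hl, hl.ne', false_or, true_and, Nat.succ_le_iff]

theorem monotonic_path_property_general (D : Dict α) (s t : List α) (hc : IsCanonical D t)
    (hts : t <:+ s) : PLTC D s t ↔ InPath D (theta D s) t := by
  obtain ⟨q, rfl⟩ := hts
  have hne := ne_nil_of_phiK_eq_singleton hc
  obtain hl | hl := (Nat.succ_le_of_lt (List.length_pos_iff.2 hne)).eq_or_lt'
  · have hlast : lastToken D 0 (q ++ t) = t := by
      rw [isBoundary_zero.lastToken_append hne,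
        lastToken_eq_self (phiK_eq_singleton_of_length_eq_one hl 0)]
    exact iff_of_true (Or.inl hl) (inPath_theta_iff_exists_lastToken.2 ⟨0, hlast⟩)
  · calc PLTC D (q ++ t) t
        ↔ lastToken D (canonIdx D t + 1) (q ++ pre D t) = pre D t := pltc_append_iff hc hl
      _ ↔ IsBoundary D (canonIdx D t + 1) q (pre D t) :=
        lastToken_append_eq_iff_isBoundary (phiK_pre hc hl (Nat.le_succ _))
      _ ↔ IsBoundary D (canonIdx D t + 1) q t := isBoundary_pre_iff hc hl
      _ ↔ lastToken D (canonIdx D t + 1) (q ++ t) = t :=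
        (lastToken_append_eq_iff_isBoundary
          ((phiK_eq_singleton_iff hc hl).2 (Nat.lt_succ_self _))).symm
      _ ↔ InPath D (theta D (q ++ t)) t := (inPath_theta_iff_lastToken_canonIdx_succ hc hl).symm

/-- **Monotonic Path Property.** Let `s` be a nonempty string and `k` the longest
canonical suffix token of `s`. A node `t` of `SufSucTree(k)` (a canonical suffix of `k`)
satisfies the Prefix Last-Token Condition with respect to `s` if and only if `t` lies
on the ancestor path `P(θ(s))` from the last token `θ(s)` to the root. -/
theorem monotonic_path_property [Fintype α] (D : Dict α) (hD : ValidDict D)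
    (s : List α) (hs : s ≠ [])
    (k : Token α) (hk1 : IsCanonical D k) (hk2 : k <:+ s)
    (hk3 : ∀ k' : Token α, IsCanonical D k' → k' <:+ s → k'.length ≤ k.length)
    (t : Token α) (htc : IsCanonical D t) (hts : t <:+ k) :
    PLTC D s t ↔ InPath D (theta D s) t :=
  monotonic_path_property_general D s t htc (hts.trans hk2)

end BPE
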